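/- Let V be a real reflexive Banach space, V₁, …, V_N closed subspaces of V, |·| a continuous seminorm on V, and F : V → ℝ convex and Gâteaux differentiable with Gâteaux derivative F', with F(v + φ) = F(v) for all v ∈ V and φ ∈ ker|·|. Let u ∈ V minimize F over V, let τ > 0 satisfy the strengthened convexity condition, and let (u^n) be generated by the PSC iteration with exact local problems from u⁰ ∈ V with F(u⁰) > F(u). Let q > 1 and suppose there exist constants C > 0 and R₀ ≥ 0 such that: (i) |v − u| ≤ R₀ for every v ∈ V with F(v) ≤ F(u⁰); (ii) for all v, w ∈ V with F(v) ≤ F(u⁰) and F(v + w) ≤ F(u⁰), there exist φ ∈ ker|·| and w_j ∈ V_j with Σ_{j=1}^N w_j = w + φ and Σ_{j=1}^N d_F(w_j; v) ≤ (C/q)|w|^q. Set ζ_n = F(u^n) − F(u). Then: if ζ₀ > C·R₀^q, then ζ₁ ≤ (1 − τ(1 − 1/q))·ζ₀; and if ζ₀ ≤ C·R₀^q, then for all n ≥ 0, ζ_n ≤ C'/(n + (C'/ζ₀)^{1/β})^β, where β = q − 1 and C' = (q/τ)^{q−1}·C·R₀^q. -/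

import Mathlib

/-- `f` is the Gâteaux derivative of `F` at `v`. -/
def HasGateauxDerivAt {V : Type*} [NormedAddCommGroup V] [NormedSpace ℝ V]
    (F : V → ℝ) (f : V →L[ℝ] ℝ) (v : V) : Prop :=
  ∀ w : V, Filter.Tendsto (fun t : ℝ => (F (v + t • w) - F v) / t)
    (nhdsWithin (0 : ℝ) {(0 : ℝ)}ᶜ) (nhds (f w))

/-!
Comparing the exact local corrections with a stable decomposition of the step `t • (ustar - u n)`
and using the convexity of `F` gives, for `ζ n = F (u n) - F ustar`, `K = C * R₀ ^ q` and every
`t ∈ [0, 1]`,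
`ζ (n + 1) ≤ ζ n + τ * (K / q * t ^ q - t * ζ n)`.
If `ζ n > K`, take `t = 1`. If `ζ n ≤ K`, the minimizer `t = (ζ n / K) ^ (1 / β)` is admissible and
yields `ζ (n + 1) ≤ ζ n * (1 - β * x n)`, where `ζ n = C' * x n ^ β`. By Bernoulli's inequality this
implies `x (n + 1) ≤ x n / (1 + x n)`, i.e. the reciprocals of `x n` grow by at least one per step.
-/

section ScalarRecursion

theorem one_add_mul_self_le_rpow_one_add_of_nonpos {s p : ℝ} (hs : -1 < s) (hp : p ≤ 0) :
    1 + p * s ≤ (1 + s) ^ p := by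
  have hpos : 0 < 1 + s := by linarith
  have hlog : Real.log (1 + s) ≤ s := by linarith [Real.log_le_sub_one_of_pos hpos]
  calc 1 + p * s ≤ 1 + Real.log (1 + s) * p := by
        rw [mul_comm p]
        gcongr 1 + ?_
        exact mul_le_mul_of_nonpos_right hlog hp
    _ ≤ Real.exp (Real.log (1 + s) * p) := by
        rw [add_comm]
        exact Real.add_one_le_exp _
    _ = (1 + s) ^ p := (Real.rpow_def_of_pos hpos p).symm

theorem le_inv_natCast_add_inv_of_forall_succ_le {x : ℕ → ℝ} (hx₀ : 0 < x 0)
    (hx : ∀ n, 0 ≤ x n) (hsucc : ∀ n, x (n + 1) ≤ x n / (1 + x n)) (n : ℕ) :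
    x n ≤ ((n : ℝ) + (x 0)⁻¹)⁻¹ := by
  induction n with
  | zero => simp
  | succ n ih =>
    have hD : 0 < (n : ℝ) + (x 0)⁻¹ := by positivity
    have hprod : x n * ((n : ℝ) + (x 0)⁻¹) ≤ 1 := (le_inv_mul_iff₀' hD).mp (by simpa using ih)
    have hxn : 0 < 1 + x n := by linarith [hx n]
    calc x (n + 1) ≤ x n / (1 + x n) := hsucc n
      _ ≤ 1 / ((n : ℝ) + (x 0)⁻¹ + 1) := by
          rw [div_le_div_iff₀ hxn (by linarith)]
          linarith
      _ = (((n + 1 : ℕ) : ℝ) + (x 0)⁻¹)⁻¹ := by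
          rw [one_div, Nat.cast_add_one, add_right_comm]

theorem rpow_div_le_div_one_add {a b c β : ℝ} (hc : 0 < c) (hβ : 0 < β) (ha : 0 ≤ a) (hb : 0 ≤ b)
    (h : b ≤ a * (1 - β * (a / c) ^ (1 / β))) :
    (b / c) ^ (1 / β) ≤ (a / c) ^ (1 / β) / (1 + (a / c) ^ (1 / β)) := by
  set x := (a / c) ^ (1 / β)
  have hx : 0 ≤ x := by positivity
  have hxβ : x ^ β = a / c := by
    rw [← Real.rpow_mul (by positivity), one_div_mul_cancel hβ.ne', Real.rpow_one]
  have hbernoulli : 1 - β * x ≤ (1 + x) ^ (-β) := by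
    have := one_add_mul_self_le_rpow_one_add_of_nonpos (s := x) (p := -β)
      (by linarith) (by linarith)
    linarith
  rw [one_div, Real.rpow_inv_le_iff_of_pos (by positivity) (by positivity) hβ,
    Real.div_rpow hx (by positivity), hxβ]
  calc b / c ≤ a * (1 + x) ^ (-β) / c := by
        gcongr
        exact h.trans (mul_le_mul_of_nonneg_left hbernoulli ha)
    _ = a / c / (1 + x) ^ β := by
        rw [Real.rpow_neg (by positivity)]
        ring

theorem le_div_natCast_add_rpow_of_forall_succ_le {a : ℕ → ℝ} {c β : ℝ} (hc : 0 < c) (hβ : 0 < β)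
    (ha₀ : 0 < a 0) (ha : ∀ n, 0 ≤ a n)
    (hsucc : ∀ n, a (n + 1) ≤ a n * (1 - β * (a n / c) ^ (1 / β))) (n : ℕ) :
    a n ≤ c / ((n : ℝ) + (c / a 0) ^ (1 / β)) ^ β := by
  have hac : ∀ n, 0 ≤ a n / c := fun n => div_nonneg (ha n) hc.le
  have hinv : ((a 0 / c) ^ (1 / β))⁻¹ = (c / a 0) ^ (1 / β) := by
    rw [← Real.inv_rpow (hac 0), inv_div]
  have hbound : (a n / c) ^ (1 / β) ≤ ((n : ℝ) + (c / a 0) ^ (1 / β))⁻¹ := by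
    rw [← hinv]
    exact le_inv_natCast_add_inv_of_forall_succ_le (x := fun n => (a n / c) ^ (1 / β))
      (by positivity) (fun n => Real.rpow_nonneg (hac n) _)
      (fun n => rpow_div_le_div_one_add hc hβ (ha n) (ha (n + 1)) (hsucc n)) n
  rw [one_div, Real.rpow_inv_le_iff_of_pos (hac n) (by positivity) hβ,
    Real.inv_rpow (by positivity), ← one_div β, div_le_iff₀ hc] at hbound
  rwa [div_eq_inv_mul]

variable {a b K q τ : ℝ}

theorem le_one_sub_mul_of_le (hτ : 0 ≤ τ) (hq : 0 ≤ q) (hK : K ≤ a)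
    (h : b ≤ a + τ * (K / q - a)) : b ≤ (1 - τ * (1 - 1 / q)) * a := by
  calc b ≤ a + τ * (K / q - a) := h
    _ ≤ a + τ * (a / q - a) := by gcongr
    _ = (1 - τ * (1 - 1 / q)) * a := by ring

theorem rpow_sub_mul_eq_at_minimizer (hK : 0 < K) (hq : 1 < q) (ha : 0 ≤ a) :
    K / q * ((a / K) ^ (1 / (q - 1))) ^ q - (a / K) ^ (1 / (q - 1)) * a =
      -((q - 1) / q * (a / K) ^ (1 / (q - 1)) * a) := by
  have hβ : 0 < q - 1 := by linarith
  set t := (a / K) ^ (1 / (q - 1))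
  have htβ : t ^ (q - 1) = a / K := by
    rw [← Real.rpow_mul (by positivity), one_div_mul_cancel hβ.ne', Real.rpow_one]
  have htq : t ^ q = a / K * t := by
    rw [← htβ, ← Real.rpow_add_one' (by positivity) (by linarith), sub_add_cancel]
  rw [htq]
  field_simp
  ring

theorem le_mul_one_sub_rpow_of_forall_le (hK : 0 < K) (hq : 1 < q) (hτ : 0 < τ) (ha : 0 ≤ a)
    (haK : a ≤ K)
    (h : ∀ t ∈ Set.Icc (0 : ℝ) 1, b ≤ a + τ * (K / q * t ^ q - t * a)) :
    b ≤ a * (1 - (q - 1) * (a / ((q / τ) ^ (q - 1) * K)) ^ (1 / (q - 1))) := by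
  have hβ : 0 < q - 1 := by linarith
  have ht : (a / K) ^ (1 / (q - 1)) ∈ Set.Icc (0 : ℝ) 1 :=
    ⟨by positivity, Real.rpow_le_one (by positivity) ((div_le_one hK).mpr haK) (by positivity)⟩
  have hscale : (a / ((q / τ) ^ (q - 1) * K)) ^ (1 / (q - 1)) =
      τ / q * (a / K) ^ (1 / (q - 1)) := by
    rw [mul_comm, ← div_div, Real.div_rpow (by positivity) (by positivity),
      ← Real.rpow_mul (by positivity), mul_one_div_cancel hβ.ne', Real.rpow_one,
      div_div_eq_mul_div, mul_div_assoc, mul_comm]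
  refine (h _ ht).trans_eq ?_
  rw [rpow_sub_mul_eq_at_minimizer hK hq ha, hscale]
  ring

end ScalarRecursion

section GateauxDerivative

variable {V : Type*} [NormedAddCommGroup V] [NormedSpace ℝ V] {F : V → ℝ} {f : V →L[ℝ] ℝ} {v : V}

theorem HasGateauxDerivAt.apply_sub_le (hf : HasGateauxDerivAt F f v) {s : Set V}
    (hF : ConvexOn ℝ s F) (hv : v ∈ s) {x : V} (hx : x ∈ s) : f (x - v) ≤ F x - F v := by
  have hright := (hf (x - v)).mono_left (nhdsGT_le_nhdsNE (0 : ℝ))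
  refine le_of_tendsto hright ?_
  filter_upwards [Ioo_mem_nhdsGT zero_lt_one] with t ht
  have hchord := hF.2 hv hx (sub_nonneg.mpr ht.2.le) ht.1.le (sub_add_cancel 1 t)
  rw [show (1 - t) • v + t • x = v + t • (x - v) by module, smul_eq_mul, smul_eq_mul] at hchord
  rw [div_le_iff₀ ht.1]
  linarith

theorem HasGateauxDerivAt.apply_eq_zero_of_forall_add_smul (hf : HasGateauxDerivAt F f v) {d : V}
    (hd : ∀ t : ℝ, F (v + t • d) = F v) : f d = 0 := by
  have hquot := hf d
  simp only [hd, sub_self, zero_div] at hquot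
  exact tendsto_nhds_unique hquot tendsto_const_nhds

end GateauxDerivative

section SubspaceCorrection

variable {V : Type*} [NormedAddCommGroup V] [NormedSpace ℝ V] {ι : Type*} [Fintype ι]

/-- The Bregman distance `d_F(w; v)`, with the derivative of `F` at `v` passed as the functional
`f`. -/
def bregmanDist (F : V → ℝ) (f : V →L[ℝ] ℝ) (w v : V) : ℝ :=
  F (v + w) - F v - f w

/-- The strengthened convexity condition with parameter `τ`, for local spaces `W j` that may be
arbitrary subsets of `V`. -/
def StrengthenedConvexity (F : V → ℝ) (W : ι → Set V) (τ : ℝ) : Prop :=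
  ∀ (v : V) (z : ι → V), (∀ j, z j ∈ W j) →
    F (v + τ • ∑ j, z j) ≤ (1 - τ * Fintype.card ι) * F v + τ * ∑ j, F (v + z j)

/-- The parallel subspace correction (PSC) iteration with exact local problems: `u` is the sequence
of iterates and `w n j` the correction from the `j`-th local space in step `n`. -/
structure IsPSCIteration (F : V → ℝ) (W : ι → Set V) (τ : ℝ) (u : ℕ → V) (w : ℕ → ι → V) :
    Prop where
  mem : ∀ n j, w n j ∈ W j
  le : ∀ n j, ∀ x ∈ W j, F (u n + w n j) ≤ F (u n + x)
  succ : ∀ n, u (n + 1) = u n + τ • ∑ j, w n j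

/-- Stable decomposition on the sublevel set `{F ≤ c}`: up to an element of `ker p`, a step `z`
between two points of that set splits into local parts whose total Bregman distance is at most
`C / q * p z ^ q`. -/
def HasStableDecomposition (F : V → ℝ) (F' : V → V →L[ℝ] ℝ) (W : ι → Set V) (p : Seminorm ℝ V)
    (c C q : ℝ) : Prop :=
  ∀ v z : V, F v ≤ c → F (v + z) ≤ c → ∃ (φ : V) (w : ι → V), p φ = 0 ∧ (∀ j, w j ∈ W j) ∧
    ∑ j, w j = z + φ ∧ ∑ j, bregmanDist F (F' v) (w j) v ≤ C / q * p z ^ q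

variable {F : V → ℝ} {F' : V → V →L[ℝ] ℝ} {W : ι → Set V} {p : Seminorm ℝ V}
  {c C R q τ : ℝ} {u : ℕ → V} {w : ℕ → ι → V}

theorem sum_sub_eq_apply_sum_add_sum_bregmanDist (F : V → ℝ) (f : V →L[ℝ] ℝ) (v : V) (z : ι → V) :
    ∑ j, (F (v + z j) - F v) = f (∑ j, z j) + ∑ j, bregmanDist F f (z j) v := by
  rw [map_sum, ← Finset.sum_add_distrib]
  exact Finset.sum_congr rfl fun j _ => (add_sub_cancel _ _).symm

theorem IsPSCIteration.apply_succ_le (h : IsPSCIteration F W τ u w)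
    (hF : StrengthenedConvexity F W τ) (hτ : 0 ≤ τ) (n : ℕ) {z : ι → V} (hz : ∀ j, z j ∈ W j) :
    F (u (n + 1)) ≤ F (u n) + τ * ∑ j, (F (u n + z j) - F (u n)) := by
  calc F (u (n + 1))
      ≤ (1 - τ * Fintype.card ι) * F (u n) + τ * ∑ j, F (u n + w n j) := by
        rw [h.succ]
        exact hF (u n) (w n) (h.mem n)
    _ ≤ (1 - τ * Fintype.card ι) * F (u n) + τ * ∑ j, F (u n + z j) := by
        gcongr with j
        exact h.le n j (z j) (hz j)
    _ = F (u n) + τ * ∑ j, (F (u n + z j) - F (u n)) := by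
        rw [Finset.sum_sub_distrib, Finset.sum_const, Finset.card_univ, nsmul_eq_mul]
        ring

theorem HasStableDecomposition.exists_sum_sub_le (h : HasStableDecomposition F F' W p c C q)
    (hconv : ConvexOn ℝ Set.univ F) (hF' : ∀ v, HasGateauxDerivAt F (F' v) v)
    (hker : ∀ v φ : V, p φ = 0 → F (v + φ) = F v) (hC : 0 ≤ C) (hq : 0 ≤ q) {v x : V}
    (hv : F v ≤ c) (hx : F x ≤ c) (hR : p (v - x) ≤ R) {t : ℝ} (ht : t ∈ Set.Icc (0 : ℝ) 1) :
    ∃ z : ι → V, (∀ j, z j ∈ W j) ∧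
      ∑ j, (F (v + z j) - F v) ≤ C * R ^ q / q * t ^ q - t * (F v - F x) := by
  have hlevel : F (v + t • (x - v)) ≤ c := by
    rw [show v + t • (x - v) = (1 - t) • v + t • x by module]
    exact (hconv.le_on_segment' (Set.mem_univ v) (Set.mem_univ x) (sub_nonneg.mpr ht.2) ht.1
      (sub_add_cancel 1 t)).trans (max_le hv hx)
  obtain ⟨φ, z, hφ, hz, hsum, hdist⟩ := h v (t • (x - v)) hv hlevel
  have hφ_deriv : F' v φ = 0 := (hF' v).apply_eq_zero_of_forall_add_smul fun s =>
    hker v (s • φ) (by rw [map_smul_eq_mul, hφ, mul_zero])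
  have hstep : p (t • (x - v)) ≤ t * R := by
    rw [map_smul_eq_mul, Real.norm_of_nonneg ht.1, map_sub_rev]
    exact mul_le_mul_of_nonneg_left hR ht.1
  refine ⟨z, hz, ?_⟩
  calc ∑ j, (F (v + z j) - F v)
      = t * F' v (x - v) + ∑ j, bregmanDist F (F' v) (z j) v := by
        rw [sum_sub_eq_apply_sum_add_sum_bregmanDist F (F' v), hsum, map_add, hφ_deriv, add_zero,
          map_smul, smul_eq_mul]
    _ ≤ t * (F x - F v) + C / q * (t * R) ^ q := by
        gcongr
        · exact ht.1
        · exact (hF' v).apply_sub_le hconv (Set.mem_univ v) (Set.mem_univ x)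
        · exact hdist.trans (by gcongr)
    _ = C * R ^ q / q * t ^ q - t * (F v - F x) := by
        rw [Real.mul_rpow ht.1 ((apply_nonneg p _).trans hR)]
        ring

theorem IsPSCIteration.sub_succ_le (h : IsPSCIteration F W τ u w)
    (hsc : StrengthenedConvexity F W τ) (hstable : HasStableDecomposition F F' W p c C q)
    (hconv : ConvexOn ℝ Set.univ F) (hF' : ∀ v, HasGateauxDerivAt F (F' v) v)
    (hker : ∀ v φ : V, p φ = 0 → F (v + φ) = F v) (hτ : 0 ≤ τ) (hC : 0 ≤ C) (hq : 0 ≤ q) {x : V}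
    {n : ℕ} (hn : F (u n) ≤ c) (hx : F x ≤ c) (hR : p (u n - x) ≤ R) {t : ℝ}
    (ht : t ∈ Set.Icc (0 : ℝ) 1) :
    F (u (n + 1)) - F x ≤
      F (u n) - F x + τ * (C * R ^ q / q * t ^ q - t * (F (u n) - F x)) := by
  obtain ⟨z, hz, hsum⟩ := hstable.exists_sum_sub_le hconv hF' hker hC hq hn hx hR ht
  have hdescent := h.apply_succ_le hsc hτ n hz
  have hscaled := mul_le_mul_of_nonneg_left hsum hτ
  linarith

theorem stmt_8_general (hconv : ConvexOn ℝ Set.univ F)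
    (hF' : ∀ v, HasGateauxDerivAt F (F' v) v) (hker : ∀ v φ : V, p φ = 0 → F (v + φ) = F v)
    {ustar : V} (hmin : ∀ v, F ustar ≤ F v) (hτ : 0 < τ) (hsc : StrengthenedConvexity F W τ)
    (hu : IsPSCIteration F W τ u w) (hinit : F ustar < F (u 0)) (hq : 1 < q) (hC : 0 ≤ C)
    (hlevel : ∀ v, F v ≤ F (u 0) → p (v - ustar) ≤ R)
    (hstable : HasStableDecomposition F F' W p (F (u 0)) C q)
    {β C' : ℝ} (hβ : β = q - 1) (hC' : C' = (q / τ) ^ (q - 1) * C * R ^ q) :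
    (∀ n, C * R ^ q < F (u n) - F ustar →
      F (u (n + 1)) - F ustar ≤ (1 - τ * (1 - 1 / q)) * (F (u n) - F ustar)) ∧
    (F (u 0) - F ustar ≤ C * R ^ q → ∀ n : ℕ, F (u n) - F ustar ≤
      C' / ((n : ℝ) + (C' / (F (u 0) - F ustar)) ^ (1 / β)) ^ β) := by
  have hdescent : ∀ n, F (u n) ≤ F (u 0) → ∀ t ∈ Set.Icc (0 : ℝ) 1, F (u (n + 1)) - F ustar ≤
      F (u n) - F ustar + τ * (C * R ^ q / q * t ^ q - t * (F (u n) - F ustar)) := fun n hn _ =>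
    hu.sub_succ_le hsc hstable hconv hF' hker hτ.le hC (by linarith) hn hinit.le (hlevel _ hn)
  have hbdd (n : ℕ) : F (u n) ≤ F (u 0) := by
    induction n with
    | zero => rfl
    | succ n ih =>
      have hzero := hdescent n ih 0 (Set.left_mem_Icc.mpr zero_le_one)
      rw [Real.zero_rpow (by linarith)] at hzero
      linarith
  have hζ₀ : 0 < F (u 0) - F ustar := sub_pos.mpr hinit
  have hζ (n : ℕ) : 0 ≤ F (u n) - F ustar := sub_nonneg.mpr (hmin _)
  constructor
  · intro n hK
    have hone := hdescent n (hbdd n) 1 (Set.right_mem_Icc.mpr zero_le_one)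
    rw [Real.one_rpow, mul_one, one_mul] at hone
    exact le_one_sub_mul_of_le hτ.le (by linarith) hK.le hone
  · intro hK
    have hKpos : 0 < C * R ^ q := hζ₀.trans_le hK
    rw [hC', hβ, mul_assoc]
    exact le_div_natCast_add_rpow_of_forall_succ_le (by positivity) (sub_pos.mpr hq) hζ₀ hζ
      fun n => le_mul_one_sub_rpow_of_forall_le hKpos hq hτ (hζ n)
        ((sub_le_sub_right (hbdd n) _).trans hK) (hdescent n (hbdd n))

end SubspaceCorrection

/-- sublinear convergence of the PSC method for semicoercive convex
problems (Theorem 4.12). -/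
theorem stmt_8 {V : Type*} [NormedAddCommGroup V] [NormedSpace ℝ V] [CompleteSpace V]
    (hrefl : Function.Surjective (NormedSpace.inclusionInDoubleDual ℝ V))
    (N : ℕ) (Vj : Fin N → Submodule ℝ V) (hVjc : ∀ j, IsClosed ((Vj j : Set V)))
    (p : Seminorm ℝ V) (hpc : Continuous (p : V → ℝ))
    (F : V → ℝ) (hconv : ConvexOn ℝ Set.univ F)
    (F' : V → V →L[ℝ] ℝ) (hF' : ∀ v : V, HasGateauxDerivAt F (F' v) v)
    (hinv : ∀ v φ : V, p φ = 0 → F (v + φ) = F v)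
    (ustar : V) (hmin : ∀ v : V, F ustar ≤ F v)
    (τ : ℝ) (hτ : 0 < τ)
    (hsc : ∀ (v : V) (z : Fin N → V), (∀ j, z j ∈ Vj j) →
      (1 - τ * (N : ℝ)) * F v + τ * ∑ j, F (v + z j) ≥ F (v + τ • ∑ j, z j))
    (u : ℕ → V) (w : ℕ → Fin N → V)
    (hwmem : ∀ n j, w n j ∈ Vj j)
    (hwmin : ∀ n j, ∀ x ∈ Vj j, F (u n + w n j) ≤ F (u n + x))
    (hupd : ∀ n : ℕ, u (n + 1) = u n + τ • ∑ j, w n j)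
    (hinit : F ustar < F (u 0))
    (q : ℝ) (hq : 1 < q)
    (C R₀ : ℝ) (hC : 0 < C) (hR₀ : 0 ≤ R₀)
    (hlevel : ∀ v : V, F v ≤ F (u 0) → p (v - ustar) ≤ R₀)
    (hstable : ∀ v z : V, F v ≤ F (u 0) → F (v + z) ≤ F (u 0) →
      ∃ (φ : V) (wj : Fin N → V), p φ = 0 ∧ (∀ j, wj j ∈ Vj j) ∧
        (∑ j, wj j) = z + φ ∧
        (∑ j, (F (v + wj j) - F v - F' v (wj j))) ≤ (C / q) * (p z) ^ q)
    (β C' : ℝ) (hβ : β = q - 1) (hC' : C' = (q / τ) ^ (q - 1) * C * R₀ ^ q) :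
    (C * R₀ ^ q < F (u 0) - F ustar →
      F (u 1) - F ustar ≤ (1 - τ * (1 - 1 / q)) * (F (u 0) - F ustar))
    ∧
    (F (u 0) - F ustar ≤ C * R₀ ^ q →
      ∀ n : ℕ, F (u n) - F ustar ≤
        C' / ((n : ℝ) + (C' / (F (u 0) - F ustar)) ^ (1 / β)) ^ β) := by
  have hsc' : StrengthenedConvexity F (fun j => (Vj j : Set V)) τ := by
    simpa only [StrengthenedConvexity, Fintype.card_fin, ge_iff_le, SetLike.mem_coe] using hsc
  exact (stmt_8_general hconv hF' hinv hmin hτ hsc' ⟨hwmem, hwmin, hupd⟩ hinit hq hC.le hlevel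
    hstable hβ hC').imp_left fun h => h 0
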